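/- Define V on hH := H × ℓ²(ℕ, H) by V(h, (u_n)_{n≥0}) := (T h, (D_T h, u_0, u_1, …)). Then V is an isometry, and for every n ≥ 0 and every h ∈ H the H-component of V^n(h, 0) equals T^n h; that is, V is an isometric dilation of T: P_H V^n|_H = T^n for all n, where P_H is the orthogonal projection onto the summand H × {0}. -/

import Mathlib

/-!
The defect identity `D_T² = I - T*T` and self-adjointness of `D_T` give
`‖T h‖² + ‖D_T h‖² = ‖h‖²` (`norm_sq_add_norm_sq_defect`). Prepending an entry `a` to a sequence
adds `‖a‖²` to the square of its `ℓ²`-norm (`norm_sq_lpCons`), so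
`‖V (h, u)‖² = ‖T h‖² + ‖D_T h‖² + ‖u‖² = ‖(h, u)‖²`. As `V` is linear, it is an isometry.
The `H`-component of `V x` is `T` applied to the `H`-component of `x`, which iterates to the
dilation property.
-/

open scoped ENNReal
open ContinuousLinearMap

noncomputable section

variable {H : Type*} [NormedAddCommGroup H] [InnerProductSpace ℂ H] [CompleteSpace H]

/-- Prepend an element to a square-summable sequence. -/
def lpCons {U : Type*} [NormedAddCommGroup U] (x : U) (f : lp (fun _ : ℕ => U) 2) :
    lp (fun _ : ℕ => U) 2 :=
  ⟨fun n => Nat.casesOn n x fun m => (f : ∀ _ : ℕ, U) m, by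
    apply memℓp_gen
    have hs : Summable fun n : ℕ => ‖(f : ∀ _ : ℕ, U) n‖ ^ (2 : ℝ≥0∞).toReal :=
      (lp.memℓp f).summable (by norm_num)
    have h1 : Summable fun n : ℕ =>
        ‖(fun n : ℕ => (Nat.casesOn n x fun m => (f : ∀ _ : ℕ, U) m : U)) (n + 1)‖
          ^ (2 : ℝ≥0∞).toReal := by
      simpa using hs
    exact (summable_nat_add_iff 1).mp h1⟩

/-- The minimal isometric dilation map `V(h, (u₀, u₁, …)) = (T h, (D_T h, u₀, u₁, …))`
on `hH = H ⊕₂ ℓ²(ℕ, H)`. -/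
def dilV (T DT : H →L[ℂ] H) :
    WithLp 2 (H × lp (fun _ : ℕ => H) 2) → WithLp 2 (H × lp (fun _ : ℕ => H) 2) :=
  fun x =>
    (WithLp.equiv 2 (H × lp (fun _ : ℕ => H) 2)).symm
      (T ((WithLp.equiv 2 (H × lp (fun _ : ℕ => H) 2)) x).1,
        lpCons (DT ((WithLp.equiv 2 (H × lp (fun _ : ℕ => H) 2)) x).1)
          ((WithLp.equiv 2 (H × lp (fun _ : ℕ => H) 2)) x).2)

theorem lpCons_add {U : Type*} [NormedAddCommGroup U] (a b : U) (f g : lp (fun _ : ℕ => U) 2) :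
    lpCons (a + b) (f + g) = lpCons a f + lpCons b g := by
  ext n
  cases n <;> rfl

theorem lpCons_smul {U : Type*} [NormedAddCommGroup U] [NormedSpace ℂ U] (c : ℂ) (a : U)
    (f : lp (fun _ : ℕ => U) 2) : lpCons (c • a) (c • f) = c • lpCons a f := by
  ext n
  cases n <;> rfl

theorem norm_sq_lpCons {U : Type*} [NormedAddCommGroup U] (a : U) (f : lp (fun _ : ℕ => U) 2) :
    ‖lpCons a f‖ ^ 2 = ‖a‖ ^ 2 + ‖f‖ ^ 2 := by
  have key : ∀ g : lp (fun _ : ℕ => U) 2, HasSum (fun n => ‖g n‖ ^ 2) (‖g‖ ^ 2) := fun g => by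
    simpa using lp.hasSum_norm (p := 2) (by norm_num) g
  have h := key (lpCons a f)
  rw [← h.tsum_eq, h.summable.tsum_eq_zero_add, ← (key f).tsum_eq]
  rfl

theorem norm_sq_add_norm_sq_defect (T DT : H →L[ℂ] H) (hDTpos : DT.IsPositive)
    (hDT : DT ∘L DT = 1 - ContinuousLinearMap.adjoint T ∘L T) (h : H) :
    ‖T h‖ ^ 2 + ‖DT h‖ ^ 2 = ‖h‖ ^ 2 := by
  have hsa : ContinuousLinearMap.adjoint DT = DT := hDTpos.isSelfAdjoint.adjoint_eq
  have hsum : ContinuousLinearMap.adjoint T ∘L T + ContinuousLinearMap.adjoint DT ∘L DT = 1 := by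
    rw [hsa, hDT, add_sub_cancel]
  have e := congrArg (fun S : H →L[ℂ] H => RCLike.re (inner ℂ (S h) h)) hsum
  simp only [add_apply, inner_add_left, map_add,
    one_apply_eq_self] at e
  rw [ContinuousLinearMap.apply_norm_sq_eq_inner_adjoint_left T,
    ContinuousLinearMap.apply_norm_sq_eq_inner_adjoint_left DT, ← inner_self_eq_norm_sq (𝕜 := ℂ) h]
  exact e

theorem norm_dilV (T DT : H →L[ℂ] H) (hDTpos : DT.IsPositive)
    (hDT : DT ∘L DT = 1 - ContinuousLinearMap.adjoint T ∘L T)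
    (x : WithLp 2 (H × lp (fun _ : ℕ => H) 2)) : ‖dilV T DT x‖ = ‖x‖ := by
  refine (sq_eq_sq₀ (norm_nonneg _) (norm_nonneg _)).mp ?_
  rw [WithLp.prod_norm_sq_eq_of_L2, WithLp.prod_norm_sq_eq_of_L2,
    ← norm_sq_add_norm_sq_defect T DT hDTpos hDT x.fst, add_assoc, ← norm_sq_lpCons (DT x.fst)]
  rfl

/-- For a contraction `T` with defect operator `D_T = √(I − T*T)`,
the map `V(h, (u_n)) = (T h, (D_T h, u₀, u₁, …))` on `H ⊕₂ ℓ²(ℕ, H)` is a (linear)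
isometry, and the `H`-component of `V^n(h, 0)` equals `T^n h` for all `n`; that is,
`V` is an isometric dilation of `T`: `P_H V^n|_H = T^n`. -/
theorem dilV_isometric_dilation
    (T : H →L[ℂ] H) (hT : ‖T‖ ≤ 1)
    (DT : H →L[ℂ] H) (hDTpos : DT.IsPositive)
    (hDT : DT ∘L DT = 1 - ContinuousLinearMap.adjoint T ∘L T) :
    (∀ x y : WithLp 2 (H × lp (fun _ : ℕ => H) 2),
      dilV T DT (x + y) = dilV T DT x + dilV T DT y) ∧
    (∀ (c : ℂ) (x : WithLp 2 (H × lp (fun _ : ℕ => H) 2)),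
      dilV T DT (c • x) = c • dilV T DT x) ∧
    Isometry (dilV T DT) ∧
    (∀ (n : ℕ) (h : H),
      ((WithLp.equiv 2 (H × lp (fun _ : ℕ => H) 2))
        ((dilV T DT)^[n]
          ((WithLp.equiv 2 (H × lp (fun _ : ℕ => H) 2)).symm (h, 0)))).1
        = (T ^ n) h) := by
  have hadd : ∀ x y : WithLp 2 (H × lp (fun _ : ℕ => H) 2),
      dilV T DT (x + y) = dilV T DT x + dilV T DT y := fun x y => by
    simp only [dilV, WithLp.equiv_apply, WithLp.equiv_symm_apply, WithLp.ofLp_add, Prod.fst_add,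
      Prod.snd_add, map_add, lpCons_add]
    rfl
  have hsmul : ∀ (c : ℂ) (x : WithLp 2 (H × lp (fun _ : ℕ => H) 2)),
      dilV T DT (c • x) = c • dilV T DT x := fun c x => by
    simp only [dilV, WithLp.equiv_apply, WithLp.equiv_symm_apply, WithLp.ofLp_smul, Prod.smul_fst,
      Prod.smul_snd, map_smul, lpCons_smul]
    rfl
  refine ⟨hadd, hsmul, ?_, fun n h => ?_⟩
  · exact AddMonoidHomClass.isometry_of_norm
      (AddMonoidHom.mk' (dilV T DT) hadd) (norm_dilV T DT hDTpos hDT)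
  · induction n with
    | zero => rfl
    | succ n ih =>
      rw [Function.iterate_succ_apply', pow_succ', ContinuousLinearMap.mul_def, ContinuousLinearMap.comp_apply, ← ih]
      rfl
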